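/- Let X = {x} be a one-element set. In the free digroup Disgp⟨X^{±1} ∪ {e} | S⟩ on {x}: every element is the class of exactly one element of Ω_e ∪ Ω_x ∪ Ω_{x⁻¹}, where Ω_e = {[ex^n]_1 : n ≥ 0}, Ω_x = {[x^i x x^j]_{|i|+1} : i, j ∈ ℤ} and Ω_{x⁻¹} = {[x^{−m}]_1 : m ≥ 1}; moreover the group part J is {class of [ex^n]_1 : n ≥ 0} ∪ {class of [x^{−m}]_1 : m ≥ 1}, and the halo E is {class of [e]_1} ∪ {class of [x^{−n}x^n]_{n+1} : n ≥ 1} ∪ {class of [x^n x^{−n}]_n : n ≥ 1}. -/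

import Mathlib

/-- The alphabet X^{±1} ∪ {e}: letters x, x⁻¹ (for x ∈ X) and the symbol e. -/
inductive Letter (X : Type*) : Type _
  | pos : X → Letter X
  | neg : X → Letter X
  | e   : Letter X

/-- The free disemigroup on Y: an element [u]_m (u a nonempty word, 1 ≤ m ≤ |u|)
is encoded as the triple (prefix before the center, center letter, suffix),
so `⟨p, c, s⟩` stands for `[p·c·s]_{|p|+1}`. -/
structure FD (Y : Type*) where
  pre : List Y
  cen : Y
  suf : List Y

namespace FD

/-- [u]_m ⊢ [v]_n = [uv]_{|u|+n}. -/
def vd {Y : Type*} (a b : FD Y) : FD Y :=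
  ⟨a.pre ++ a.cen :: (a.suf ++ b.pre), b.cen, b.suf⟩

/-- [u]_m ⊣ [v]_n = [uv]_m. -/
def dv {Y : Type*} (a b : FD Y) : FD Y :=
  ⟨a.pre, a.cen, a.suf ++ b.pre ++ b.cen :: b.suf⟩

/-- The underlying associative word of [u]_m. -/
def word {Y : Type*} (a : FD Y) : List Y := a.pre ++ a.cen :: a.suf

end FD

/-- The congruence ρ(r) on the free disemigroup generated by a set of relations r:
the smallest equivalence relation containing r compatible with ⊢ and ⊣. -/
inductive DCongr {Y : Type*} (r : FD Y → FD Y → Prop) : FD Y → FD Y → Prop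
  | of {a b : FD Y} : r a b → DCongr r a b
  | refl (a : FD Y) : DCongr r a a
  | symm {a b : FD Y} : DCongr r a b → DCongr r b a
  | trans {a b c : FD Y} : DCongr r a b → DCongr r b c → DCongr r a c
  | vd {a b c d : FD Y} : DCongr r a b → DCongr r c d → DCongr r (a.vd c) (b.vd d)
  | dv {a b c d : FD Y} : DCongr r a b → DCongr r c d → DCongr r (a.dv c) (b.dv d)

/-- The defining relations S of the free digroup:
[xx⁻¹]₂ = [e]₁, [x⁻¹x]₁ = [e]₁, [ye]₁ = [y]₁, [ey]₂ = [y]₁. -/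
def rel (X : Type*) : FD (Letter X) → FD (Letter X) → Prop := fun a b =>
  (∃ x : X, a = ⟨[Letter.pos x], Letter.neg x, []⟩ ∧ b = ⟨[], Letter.e, []⟩) ∨
  (∃ x : X, a = ⟨[], Letter.neg x, [Letter.pos x]⟩ ∧ b = ⟨[], Letter.e, []⟩) ∨
  (∃ y : Letter X, a = ⟨[], y, [Letter.e]⟩ ∧ b = ⟨[], y, []⟩) ∨
  (∃ y : Letter X, a = ⟨[Letter.e], y, []⟩ ∧ b = ⟨[], y, []⟩)

/-- The quotient disemigroup Disgp⟨X^{±1} ∪ {e} | S⟩. -/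
def DQ (X : Type*) := Quot (DCongr (rel X))

/-- The class of an element of the free disemigroup in the quotient. -/
def cls {X : Type*} (a : FD (Letter X)) : DQ X := Quot.mk _ a

/-- The operation ⊢ on the quotient. -/
def DQ.vd {X : Type*} : DQ X → DQ X → DQ X :=
  Quot.map₂ FD.vd (fun a _ _ h => DCongr.vd (DCongr.refl a) h)
    (fun _ _ b h => DCongr.vd h (DCongr.refl b))

/-- The operation ⊣ on the quotient. -/
def DQ.dv {X : Type*} : DQ X → DQ X → DQ X :=
  Quot.map₂ FD.dv (fun a _ _ h => DCongr.dv (DCongr.refl a) h)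
    (fun _ _ b h => DCongr.dv h (DCongr.refl b))

/-- The class of [e]₁, the unit of the free digroup. -/
def unitE (X : Type*) : DQ X := cls ⟨[], Letter.e, []⟩

/-- Words over X^{±1} are lists of pairs (x, b), where (x, true) is x and
(x, false) is x⁻¹, as for `FreeGroup`. This converts such a pair to a `Letter`. -/
def pm {X : Type*} (p : X × Bool) : Letter X :=
  if p.2 then Letter.pos p.1 else Letter.neg p.1

/-- A word over X^{±1} is reduced (lies in gp⟨X⟩) if it has no adjacent pair
of mutually inverse letters. -/
def Reduced {X : Type*} (L : List (X × Bool)) : Prop :=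
  List.Chain' (fun a b => ¬(a.1 = b.1 ∧ a.2 = !b.2)) L

/-- Delete all occurrences of e from a word over X^{±1} ∪ {e} (the map τ). -/
def strip {X : Type*} (L : List (Letter X)) : List (X × Bool) :=
  L.flatMap fun l => match l with
    | Letter.pos x => [(x, true)]
    | Letter.neg x => [(x, false)]
    | Letter.e => []

/-- ŵ: the reduced word of w, obtained by deleting the e's and freely reducing. -/
noncomputable def hat {X : Type*} (L : List (Letter X)) : List (X × Bool) :=
  letI := Classical.decEq X
  FreeGroup.reduce (strip L)

/-- λ(w): the (1-based) position of the first letter of w lying in X⁻¹. -/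
def lam {X : Type*} (L : List (X × Bool)) : ℕ := L.findIdx (fun p => !p.2) + 1

/-- The element [L]_m of the free disemigroup determined by a word L over X^{±1}
and a center position m. -/
def toNF {X : Type*} (L : List (X × Bool)) (m : ℕ) : FD (Letter X) :=
  ⟨(L.take (m - 1)).map pm, ((L[m-1]?).map pm).getD Letter.e, (L.drop m).map pm⟩

/-- Ω_e = {[eu]₁ : u ∈ X*}. -/
def OmegaE (X : Type*) : Set (FD (Letter X)) :=
  {a | ∃ u : List X, a = ⟨[], Letter.e, u.map Letter.pos⟩}

/-- Ω_X = {[uxv]_{|u|+1} : x ∈ X, u, v ∈ gp⟨X⟩}. -/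
def OmegaX (X : Type*) : Set (FD (Letter X)) :=
  {a | ∃ (x : X) (u v : List (X × Bool)), Reduced u ∧ Reduced v ∧
    a = ⟨u.map pm, Letter.pos x, v.map pm⟩}

/-- Ω_{X⁻¹} = {[ux⁻¹v]_{|u|+1} : x ∈ X, u ∈ X*, v ∈ (X^{±1})*, ux⁻¹v reduced}. -/
def OmegaInv (X : Type*) : Set (FD (Letter X)) :=
  {a | ∃ (x : X) (u : List X) (v : List (X × Bool)),
    Reduced ((u.map fun y => (y, true)) ++ (x, false) :: v) ∧
    a = ⟨u.map Letter.pos, Letter.neg x, v.map pm⟩}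

/-- Inversion of a single letter. -/
def linv {X : Type*} : Letter X → Letter X
  | Letter.pos x => Letter.neg x
  | Letter.neg x => Letter.pos x
  | Letter.e => Letter.e

/-- The formal inverse w⁻¹ of a word over X^{±1}. -/
def invw {X : Type*} (L : List (X × Bool)) : List (X × Bool) :=
  L.reverse.map fun p => (p.1, !p.2)

/-- For i ∈ ℤ, the word x^i over {x}^{±1}: i copies of x if i ≥ 0,
|i| copies of x⁻¹ if i < 0. -/
def zw (i : ℤ) : List (Letter Unit) :=
  if 0 ≤ i then List.replicate i.toNat (Letter.pos ())
  else List.replicate (-i).toNat (Letter.neg ())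

/-- Ω_e = {[ex^n]₁ : n ≥ 0} in the one-generator case. -/
def OmE1 : Set (FD (Letter Unit)) :=
  {a | ∃ n : ℕ, a = ⟨[], Letter.e, List.replicate n (Letter.pos ())⟩}

/-- Ω_x = {[x^i x x^j]_{|i|+1} : i, j ∈ ℤ}. -/
def OmX1 : Set (FD (Letter Unit)) :=
  {a | ∃ i j : ℤ, a = ⟨zw i, Letter.pos (), zw j⟩}

/-- Ω_{x⁻¹} = {[x^{−m}]₁ : m ≥ 1}. -/
def OmI1 : Set (FD (Letter Unit)) :=
  {a | ∃ m : ℕ, 1 ≤ m ∧ a = ⟨[], Letter.neg (), List.replicate (m - 1) (Letter.neg ())⟩}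

/-!
A digroup is a product of a group `G` and a pointed `G`-set `E`, with
`(g, a) ⊢ (h, b) = (gh, g • b)` and `(g, a) ⊣ (h, b) = (gh, a)`. For the free digroup on `X`, the
group is `FreeGroup X` and the pointed set is freely generated by `X`. An element `[pcs]` therefore
has as coordinates the value of the word `pcs` in the free group, together with the base point when
`c ∉ X`, and the translate of the generator `c` by the value of `p` when `c ∈ X`.

The coordinates respect `S`. Conversely, multiplication by letters makes the quotient a
`FreeGroup X`-biset, so the class of `[pcs]` depends on `p` and `s` only through their values.
The two actions agree on the unit, and the class of `x⁻¹` is a translate of the unit, so the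
coordinates determine the class.

On one generator the free group is `ℤ` and the coordinates range over `ℤ × Option ℤ`; the
elements of `Ω_e ∪ Ω_x ∪ Ω_{x⁻¹}` are one representative for each pair.
-/

open MulOpposite
open scoped RightActions

section Coordinates

variable {X : Type*}

/-- The free pointed `FreeGroup X`-set on `X`, which is the halo of the free digroup; the base point
`none` is fixed by the action. -/
abbrev FreeHalo (X : Type*) := Option (Σ _ : X, FreeGroup X)

namespace Letter

/-- The element of the free group represented by a letter. -/
def freeVal : Letter X → FreeGroup X
  | pos x => .of x
  | neg x => (.of x)⁻¹
  | e => 1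

/-- The halo coordinate of a one-letter element of the free disemigroup. -/
def haloVal : Letter X → FreeHalo X
  | pos x => some ⟨x, 1⟩
  | neg _ => none
  | e => none

end Letter

/-- The element of the free group represented by a word. -/
def wordVal (L : List (Letter X)) : FreeGroup X := (L.map Letter.freeVal).prod

@[simp] theorem wordVal_nil : wordVal ([] : List (Letter X)) = 1 := rfl

@[simp] theorem wordVal_cons (y : Letter X) (L : List (Letter X)) :
    wordVal (y :: L) = y.freeVal * wordVal L := List.prod_cons

@[simp] theorem wordVal_append (L M : List (Letter X)) :
    wordVal (L ++ M) = wordVal L * wordVal M := by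
  simp [wordVal]

@[simp] theorem wordVal_replicate (n : ℕ) (y : Letter X) :
    wordVal (List.replicate n y) = y.freeVal ^ n := by
  simp [wordVal]

theorem wordVal_surjective : Function.Surjective (wordVal (X := X)) := by
  intro g
  induction g using FreeGroup.induction_on with
  | C1 => exact ⟨[], rfl⟩
  | of x => exact ⟨[.pos x], by simp [Letter.freeVal]⟩
  | inv_of x => exact ⟨[.neg x], by simp [Letter.freeVal]⟩
  | mul g h hg hh =>
    obtain ⟨p, rfl⟩ := hg
    obtain ⟨q, rfl⟩ := hh
    exact ⟨p ++ q, wordVal_append p q⟩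

namespace FD

/-- The coordinates of an element of the free disemigroup in the product of the free group and the
free halo. -/
def coord (a : FD (Letter X)) : FreeGroup X × FreeHalo X :=
  (wordVal a.word, wordVal a.pre • a.cen.haloVal)

theorem coord_vd (a b : FD (Letter X)) :
    (a.vd b).coord = (a.coord.1 * b.coord.1, a.coord.1 • b.coord.2) := by
  simp [coord, vd, word, smul_smul, mul_assoc]

theorem coord_dv (a b : FD (Letter X)) :
    (a.dv b).coord = (a.coord.1 * b.coord.1, a.coord.2) := by
  simp [coord, dv, word, mul_assoc]

theorem coord_eq_of_rel {a b : FD (Letter X)} (h : rel X a b) : a.coord = b.coord := by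
  rcases h with ⟨x, rfl, rfl⟩ | ⟨x, rfl, rfl⟩ | ⟨y, rfl, rfl⟩ | ⟨y, rfl, rfl⟩ <;>
    simp [coord, word, Letter.freeVal, Letter.haloVal]

theorem coord_eq_of_dCongr {a b : FD (Letter X)} (h : DCongr (rel X) a b) :
    a.coord = b.coord := by
  induction h with
  | of h => exact coord_eq_of_rel h
  | refl => rfl
  | symm _ ih => exact ih.symm
  | trans _ _ ih₁ ih₂ => exact ih₁.trans ih₂
  | vd _ _ ih₁ ih₂ => rw [coord_vd, coord_vd, ih₁, ih₂]
  | dv _ _ ih₁ ih₂ => rw [coord_dv, coord_dv, ih₁, ih₂]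

end FD

namespace DQ

theorem exists_cls_mk (a : DQ X) : ∃ p c s, cls ⟨p, c, s⟩ = a := by
  obtain ⟨⟨p, c, s⟩, rfl⟩ := Quot.exists_rep a
  exact ⟨p, c, s, rfl⟩

/-- The coordinates of an element of the free digroup. -/
def coord : DQ X → FreeGroup X × FreeHalo X :=
  Quot.lift FD.coord fun _ _ => FD.coord_eq_of_dCongr

theorem coord_cls (a : FD (Letter X)) : coord (cls a) = a.coord := rfl

theorem coord_unitE : coord (unitE X) = (1, none) := rfl

theorem coord_vd (a b : DQ X) :
    (a.vd b).coord = (a.coord.1 * b.coord.1, a.coord.1 • b.coord.2) :=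
  Quot.induction_on₂ a b FD.coord_vd

theorem coord_dv (a b : DQ X) :
    (a.dv b).coord = (a.coord.1 * b.coord.1, a.coord.2) :=
  Quot.induction_on₂ a b FD.coord_dv

end DQ

end Coordinates

namespace DQ

variable {X : Type*}

section Laws

theorem vd_assoc (a b c : DQ X) : (a.vd b).vd c = a.vd (b.vd c) :=
  Quot.induction_on₃ a b c fun _ _ _ => congrArg cls (by simp [FD.vd])

theorem dv_assoc (a b c : DQ X) : (a.dv b).dv c = a.dv (b.dv c) :=
  Quot.induction_on₃ a b c fun _ _ _ => congrArg cls (by simp [FD.dv])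

theorem vd_dv_assoc (a b c : DQ X) : (a.vd b).dv c = a.vd (b.dv c) :=
  Quot.induction_on₃ a b c fun _ _ _ => congrArg cls (by simp [FD.vd, FD.dv])

theorem dv_vd_eq_vd_vd (a b c : DQ X) : (a.dv b).vd c = (a.vd b).vd c :=
  Quot.induction_on₃ a b c fun _ _ _ => congrArg cls (by simp [FD.vd, FD.dv])

theorem dv_dv_eq_dv_vd (a b c : DQ X) : a.dv (b.dv c) = a.dv (b.vd c) :=
  Quot.induction_on₃ a b c fun _ _ _ => congrArg cls (by simp [FD.vd, FD.dv])

/-- The class `[y]₁` of a letter. -/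
def letter (y : Letter X) : DQ X := cls ⟨[], y, []⟩

theorem letter_e : letter .e = unitE X := rfl

theorem pos_vd_neg (x : X) : (letter (.pos x)).vd (letter (.neg x)) = unitE X :=
  Quot.sound (.of (.inl ⟨x, rfl, rfl⟩))

theorem neg_dv_pos (x : X) : (letter (.neg x)).dv (letter (.pos x)) = unitE X :=
  Quot.sound (.of (.inr (.inl ⟨x, rfl, rfl⟩)))

theorem letter_dv_unitE (y : Letter X) : (letter y).dv (unitE X) = letter y :=
  Quot.sound (.of (.inr (.inr (.inl ⟨y, rfl, rfl⟩))))

theorem unitE_vd_letter (y : Letter X) : (unitE X).vd (letter y) = letter y :=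
  Quot.sound (.of (.inr (.inr (.inr ⟨y, rfl, rfl⟩))))

theorem cls_cons_pre (y c : Letter X) (p s : List (Letter X)) :
    cls ⟨y :: p, c, s⟩ = (letter y).vd (cls ⟨p, c, s⟩) := rfl

theorem cls_append_suf (y c : Letter X) (p s : List (Letter X)) :
    cls ⟨p, c, s ++ [y]⟩ = (cls ⟨p, c, s⟩).dv (letter y) :=
  congrArg cls (by simp [FD.dv])

theorem unitE_vd (a : DQ X) : (unitE X).vd a = a := by
  obtain ⟨p, c, s, rfl⟩ := a.exists_cls_mk
  cases p with
  | cons y p => rw [cls_cons_pre, ← vd_assoc, unitE_vd_letter]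
  | nil =>
    induction s using List.reverseRecOn with
    | nil => exact unitE_vd_letter c
    | append_singleton s y ih => rw [cls_append_suf, ← vd_dv_assoc, ih]

theorem dv_unitE (a : DQ X) : a.dv (unitE X) = a := by
  obtain ⟨p, c, s, rfl⟩ := a.exists_cls_mk
  induction s using List.reverseRecOn with
  | append_singleton s y => rw [cls_append_suf, dv_assoc, letter_dv_unitE]
  | nil =>
    induction p with
    | nil => exact letter_dv_unitE c
    | cons y p ih => rw [cls_cons_pre, vd_dv_assoc, ih]

end Laws

section Actions

theorem pos_vd_neg_vd (x : X) (a : DQ X) :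
    (letter (.pos x)).vd ((letter (.neg x)).vd a) = a := by
  rw [← vd_assoc, pos_vd_neg, unitE_vd]

theorem neg_vd_pos_vd (x : X) (a : DQ X) :
    (letter (.neg x)).vd ((letter (.pos x)).vd a) = a := by
  rw [← vd_assoc, ← dv_vd_eq_vd_vd, neg_dv_pos, unitE_vd]

theorem dv_pos_dv_neg (x : X) (a : DQ X) :
    (a.dv (letter (.pos x))).dv (letter (.neg x)) = a := by
  rw [dv_assoc, dv_dv_eq_dv_vd, pos_vd_neg, dv_unitE]

theorem dv_neg_dv_pos (x : X) (a : DQ X) :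
    (a.dv (letter (.neg x))).dv (letter (.pos x)) = a := by
  rw [dv_assoc, neg_dv_pos, dv_unitE]

/-- The left action of the free group, in which a generator `x` acts by `[x]₁ ⊢ ·`. -/
def leftMul : FreeGroup X →* Equiv.Perm (DQ X) :=
  FreeGroup.lift fun x =>
    { toFun := (letter (.pos x)).vd
      invFun := (letter (.neg x)).vd
      left_inv := neg_vd_pos_vd x
      right_inv := pos_vd_neg_vd x }

/-- The right action of the free group, in which a generator `x` acts by `· ⊣ [x]₁`. -/
def rightMul : FreeGroup X →* (Equiv.Perm (DQ X))ᵐᵒᵖ :=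
  FreeGroup.lift fun x => op
    { toFun := fun a => a.dv (letter (.pos x))
      invFun := fun a => a.dv (letter (.neg x))
      left_inv := dv_pos_dv_neg x
      right_inv := dv_neg_dv_pos x }

instance : MulAction (FreeGroup X) (DQ X) := MulAction.compHom _ leftMul

instance : MulAction (FreeGroup X)ᵐᵒᵖ (DQ X) where
  smul g a := (rightMul g.unop).unop a
  one_smul a := congrArg (fun f => f.unop a) rightMul.map_one
  mul_smul g h a := congrArg (fun f => f.unop a) (rightMul.map_mul h.unop g.unop)

theorem of_smul (x : X) (a : DQ X) : FreeGroup.of x •> a = (letter (.pos x)).vd a :=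
  congrArg (fun f : Equiv.Perm (DQ X) => f a) (FreeGroup.lift_apply_of (x := x))

theorem op_of_smul (x : X) (a : DQ X) : a <• FreeGroup.of x = a.dv (letter (.pos x)) :=
  congrArg (fun f : (Equiv.Perm (DQ X))ᵐᵒᵖ => f.unop a) (FreeGroup.lift_apply_of (x := x))

theorem freeVal_smul (y : Letter X) (a : DQ X) : y.freeVal •> a = (letter y).vd a := by
  cases y with
  | pos x => exact of_smul x a
  | neg x => rw [Letter.freeVal, inv_smul_eq_iff, of_smul, pos_vd_neg_vd]
  | e => exact (one_smul _ a).trans (unitE_vd a).symm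

theorem op_freeVal_smul (y : Letter X) (a : DQ X) : a <• y.freeVal = a.dv (letter y) := by
  cases y with
  | pos x => exact op_of_smul x a
  | neg x => rw [Letter.freeVal, op_inv, inv_smul_eq_iff, op_of_smul, dv_neg_dv_pos]
  | e => exact (one_smul _ a).trans (dv_unitE a).symm

theorem wordVal_smul_cls (r p : List (Letter X)) (c : Letter X) (s : List (Letter X)) :
    wordVal r •> cls ⟨p, c, s⟩ = cls ⟨r ++ p, c, s⟩ := by
  induction r with
  | nil => exact one_smul _ _
  | cons y r ih => rw [wordVal_cons, mul_smul, ih, freeVal_smul, List.cons_append, cls_cons_pre]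

theorem op_wordVal_smul_cls (r p : List (Letter X)) (c : Letter X) (s : List (Letter X)) :
    cls ⟨p, c, s⟩ <• wordVal r = cls ⟨p, c, s ++ r⟩ := by
  induction r generalizing s with
  | nil => rw [wordVal_nil, op_one, one_smul, List.append_nil]
  | cons y r ih =>
    rw [wordVal_cons, op_mul, mul_smul, op_freeVal_smul, ← cls_append_suf, ih, List.append_assoc,
      List.singleton_append]

instance : SMulCommClass (FreeGroup X) (FreeGroup X)ᵐᵒᵖ (DQ X) where
  smul_comm g h a := by
    obtain ⟨p, rfl⟩ := wordVal_surjective g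
    obtain ⟨s, hs⟩ := wordVal_surjective h.unop
    obtain ⟨q, c, t, rfl⟩ := a.exists_cls_mk
    rw [← op_unop h, ← hs]
    simp only [wordVal_smul_cls, op_wordVal_smul_cls]

theorem cls_mk (p : List (Letter X)) (c : Letter X) (s : List (Letter X)) :
    cls ⟨p, c, s⟩ = wordVal p •> letter c <• wordVal s := by
  rw [letter, wordVal_smul_cls, op_wordVal_smul_cls, List.append_nil, List.nil_append]

theorem smul_unitE (g : FreeGroup X) : g •> unitE X = unitE X <• g := by
  induction g using FreeGroup.induction_on with
  | C1 => rw [op_one, one_smul, one_smul]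
  | of x =>
    calc FreeGroup.of x •> unitE X
        = (letter (.pos x)).vd ((letter (.neg x)).dv (letter (.pos x))) := by
          rw [of_smul, neg_dv_pos]
      _ = unitE X <• FreeGroup.of x := by rw [← vd_dv_assoc, pos_vd_neg, op_of_smul]
  | inv_of x ih =>
    rw [inv_smul_eq_iff, smul_comm, ih, op_inv, inv_smul_smul]
  | mul g h hg hh => rw [mul_smul, hh, smul_comm, hg, op_mul, mul_smul]

theorem letter_neg (x : X) : letter (.neg x) = (FreeGroup.of x)⁻¹ •> unitE X :=
  eq_inv_smul_iff.2 ((of_smul x _).trans (pos_vd_neg x))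

theorem coord_smul (g : FreeGroup X) (a : DQ X) :
    (g •> a).coord = (g * a.coord.1, g • a.coord.2) := by
  obtain ⟨r, rfl⟩ := wordVal_surjective g
  obtain ⟨p, c, s, rfl⟩ := a.exists_cls_mk
  simp [wordVal_smul_cls, coord_cls, FD.coord, FD.word, mul_smul]

theorem coord_op_smul (g : FreeGroup X) (a : DQ X) :
    (a <• g).coord = (a.coord.1 * g, a.coord.2) := by
  obtain ⟨r, rfl⟩ := wordVal_surjective g
  obtain ⟨p, c, s, rfl⟩ := a.exists_cls_mk
  simp [op_wordVal_smul_cls, coord_cls, FD.coord, FD.word, mul_assoc]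

end Actions

section Classification

/-- The element of the free digroup with given coordinates. -/
def ofCoord : FreeGroup X × FreeHalo X → DQ X
  | (g, none) => unitE X <• g
  | (g, some ⟨x, h⟩) => h •> letter (.pos x) <• ((h * .of x)⁻¹ * g)

theorem ofCoord_coord (a : DQ X) : ofCoord a.coord = a := by
  obtain ⟨p, c, s, rfl⟩ := a.exists_cls_mk
  rw [coord_cls, cls_mk]
  cases c with
  | pos x => simp [FD.coord, FD.word, ofCoord, Letter.haloVal, Letter.freeVal, mul_assoc]
  | neg x =>
    rw [letter_neg, smul_smul, smul_unitE, smul_smul, ← op_mul]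
    simp [FD.coord, FD.word, ofCoord, Letter.haloVal, Letter.freeVal, mul_assoc]
  | e =>
    rw [letter_e, smul_unitE, smul_smul, ← op_mul]
    simp [FD.coord, FD.word, ofCoord, Letter.haloVal, Letter.freeVal]

theorem coord_ofCoord (v : FreeGroup X × FreeHalo X) : (ofCoord v).coord = v := by
  obtain ⟨g, _ | ⟨x, h⟩⟩ := v
  · simp [ofCoord, coord_op_smul, coord_unitE]
  · rw [ofCoord, coord_op_smul, coord_smul]
    simp [letter, coord_cls, FD.coord, FD.word, Letter.haloVal, Letter.freeVal, mul_assoc]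

/-- The free digroup on `X` as the product of its group part and its halo. -/
def coordEquiv : DQ X ≃ FreeGroup X × FreeHalo X where
  toFun := coord
  invFun := ofCoord
  left_inv := ofCoord_coord
  right_inv := coord_ofCoord

/-- The group part `J = {a† : a ∈ D}`: the elements that are the inverse of some element. -/
def groupPart (X : Type*) : Set (DQ X) := {b | ∃ a, a.vd b = unitE X ∧ b.dv a = unitE X}

/-- The halo `E`: the elements that act as bar-units, on the left of `⊢` and the right of `⊣`. -/
def halo (X : Type*) : Set (DQ X) := {h | ∀ a, h.vd a = a ∧ a.dv h = a}

theorem coord_injective : Function.Injective (coord (X := X)) := coordEquiv.injective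

theorem mem_groupPart_iff {b : DQ X} : b ∈ groupPart X ↔ b.coord.2 = none := by
  constructor
  · rintro ⟨a, -, hba⟩
    simpa [coord_dv, coord_unitE] using congrArg (fun c => c.coord.2) hba
  · intro hb
    refine ⟨ofCoord (b.coord.1⁻¹, none), coord_injective ?_, coord_injective ?_⟩
    · simp [coord_vd, coord_ofCoord, hb, coord_unitE]
    · simp [coord_dv, coord_ofCoord, hb, coord_unitE]

theorem mem_halo_iff {h : DQ X} : h ∈ halo X ↔ h.coord.1 = 1 := by
  constructor
  · intro hh
    simpa [coord_dv, coord_unitE] using congrArg (fun c => c.coord.1) (hh (unitE X)).2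
  · intro hh a
    exact ⟨coord_injective (by simp [coord_vd, hh]), coord_injective (by simp [coord_dv, hh])⟩

end Classification

end DQ

section OneGenerator

open FreeGroup (freeGroupUnitEquivInt)

theorem zw_natCast (n : ℕ) : zw n = List.replicate n (Letter.pos ()) := rfl

theorem zw_negSucc (n : ℕ) : zw (.negSucc n) = List.replicate (n + 1) (Letter.neg ()) := rfl

theorem wordVal_zw (i : ℤ) : wordVal (zw i) = FreeGroup.of () ^ i := by
  cases i with
  | ofNat n => simp [zw_natCast, Letter.freeVal]
  | negSucc n => simp [zw_negSucc, Letter.freeVal, zpow_negSucc]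

/-- The element of `Ω_e ∪ Ω_x ∪ Ω_{x⁻¹}` of exponent sum `n`, centered at the letter `x` after
`x^i` if the second component is `some i`, and not centered at `x` if it is `none`. -/
def normalForm : ℤ × Option ℤ → FD (Letter Unit)
  | (.ofNat n, none) => ⟨[], .e, List.replicate n (.pos ())⟩
  | (.negSucc k, none) => ⟨[], .neg (), List.replicate k (.neg ())⟩
  | (n, some i) => ⟨zw i, .pos (), zw (n - 1 - i)⟩

theorem normalForm_zero_natCast (n : ℕ) :
    normalForm (0, some n) =
      ⟨List.replicate n (.pos ()), .pos (), List.replicate (n + 1) (.neg ())⟩ := by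
  rw [normalForm, show (0 - 1 - n : ℤ) = .negSucc n by omega, zw_natCast, zw_negSucc]

theorem normalForm_zero_negSucc (k : ℕ) :
    normalForm (0, some (.negSucc k)) =
      ⟨List.replicate (k + 1) (.neg ()), .pos (), List.replicate k (.pos ())⟩ := by
  rw [normalForm, show (0 - 1 - .negSucc k : ℤ) = k by omega, zw_natCast, zw_negSucc]

theorem range_normalForm : Set.range normalForm = OmE1 ∪ OmX1 ∪ OmI1 := by
  ext a
  constructor
  · rintro ⟨⟨n | k, _ | i⟩, rfl⟩
    · exact .inl (.inl ⟨n, rfl⟩)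
    · exact .inl (.inr ⟨i, _, rfl⟩)
    · exact .inr ⟨k + 1, k.succ_pos, rfl⟩
    · exact .inl (.inr ⟨i, _, rfl⟩)
  · rintro ((⟨n, rfl⟩ | ⟨i, j, rfl⟩) | ⟨m, hm, rfl⟩)
    · exact ⟨(n, none), rfl⟩
    · exact ⟨(i + 1 + j, some i), by rw [normalForm, show i + 1 + j - 1 - i = j by ring]⟩
    · obtain ⟨k, rfl⟩ := Nat.exists_eq_add_of_le' hm
      exact ⟨(.negSucc k, none), rfl⟩

theorem coord_normalForm (v : ℤ × Option ℤ) :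
    (normalForm v).coord =
      (FreeGroup.of () ^ v.1, v.2.map fun i => ⟨(), FreeGroup.of () ^ i⟩) := by
  obtain ⟨n, _ | i⟩ := v
  · cases n with
    | ofNat n => simp [normalForm, FD.coord, FD.word, Letter.freeVal, Letter.haloVal]
    | negSucc k =>
      simp [normalForm, FD.coord, FD.word, Letter.freeVal, Letter.haloVal, zpow_negSucc, pow_succ]
  · have exponent_sum : i + (1 + (n - 1 - i)) = n := by ring
    simp [normalForm, FD.coord, FD.word, Letter.freeVal, Letter.haloVal, wordVal_zw,
      ← zpow_one_add, ← zpow_add, exponent_sum]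

namespace DQ

/-- The free digroup on one generator `x` with `FreeGroup Unit` identified with `ℤ` by
`x^n ↦ n`. -/
def intCoordEquiv : DQ Unit ≃ ℤ × Option ℤ :=
  coordEquiv.trans <| freeGroupUnitEquivInt.prodCongr <| Equiv.optionCongr <|
    (Equiv.uniqueSigma fun _ => FreeGroup Unit).trans freeGroupUnitEquivInt

theorem intCoordEquiv_symm_apply (v : ℤ × Option ℤ) :
    intCoordEquiv.symm v = cls (normalForm v) :=
  coord_injective ((coord_ofCoord _).trans (coord_normalForm v).symm)

theorem cls_normalForm_bijective : Function.Bijective fun v => cls (normalForm v) :=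
  (funext intCoordEquiv_symm_apply : ⇑intCoordEquiv.symm = _) ▸ intCoordEquiv.symm.bijective

theorem existsUnique_normalForm (c : DQ Unit) :
    ∃! a : FD (Letter Unit), a ∈ OmE1 ∪ OmX1 ∪ OmI1 ∧ cls a = c := by
  obtain ⟨v, rfl⟩ := cls_normalForm_bijective.surjective c
  rw [← range_normalForm]
  refine ⟨normalForm v, ⟨⟨v, rfl⟩, rfl⟩, ?_⟩
  rintro _ ⟨⟨w, rfl⟩, hw⟩
  rw [cls_normalForm_bijective.injective hw]

theorem mem_groupPart_iff_exists_normalForm {c : DQ Unit} :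
    c ∈ groupPart Unit ↔ ∃ n, c = cls (normalForm (n, none)) := by
  obtain ⟨⟨n, o⟩, rfl⟩ := cls_normalForm_bijective.surjective c
  simp [mem_groupPart_iff, coord_cls, coord_normalForm, cls_normalForm_bijective.injective.eq_iff]

theorem mem_halo_iff_exists_normalForm {c : DQ Unit} :
    c ∈ halo Unit ↔ ∃ o, c = cls (normalForm (0, o)) := by
  obtain ⟨⟨n, o⟩, rfl⟩ := cls_normalForm_bijective.surjective c
  simp [mem_halo_iff, coord_cls, coord_normalForm,
    cls_normalForm_bijective.injective.eq_iff]

theorem exists_eq_normalForm_none_iff {c : DQ Unit} :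
    (∃ n, c = cls (normalForm (n, none))) ↔
      (∃ n : ℕ, c = cls ⟨[], .e, List.replicate n (.pos ())⟩) ∨
        ∃ m : ℕ, 1 ≤ m ∧ c = cls ⟨[], .neg (), List.replicate (m - 1) (.neg ())⟩ := by
  constructor
  · rintro ⟨n | k, rfl⟩
    · exact .inl ⟨n, rfl⟩
    · exact .inr ⟨k + 1, k.succ_pos, rfl⟩
  · rintro (⟨n, rfl⟩ | ⟨m, hm, rfl⟩)
    · exact ⟨n, rfl⟩
    · obtain ⟨k, rfl⟩ := Nat.exists_eq_add_of_le' hm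
      exact ⟨.negSucc k, rfl⟩

theorem exists_eq_normalForm_zero_iff {c : DQ Unit} :
    (∃ o, c = cls (normalForm (0, o))) ↔
      c = unitE Unit ∨
        (∃ n : ℕ, 1 ≤ n ∧
          c = cls ⟨List.replicate n (.neg ()), .pos (), List.replicate (n - 1) (.pos ())⟩) ∨
        ∃ n : ℕ, 1 ≤ n ∧
          c = cls ⟨List.replicate (n - 1) (.pos ()), .pos (), List.replicate n (.neg ())⟩ := by
  constructor
  · rintro ⟨_ | n | k, rfl⟩
    · exact .inl rfl
    · exact .inr (.inr ⟨n + 1, n.succ_pos, congrArg cls (normalForm_zero_natCast n)⟩)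
    · exact .inr (.inl ⟨k + 1, k.succ_pos, congrArg cls (normalForm_zero_negSucc k)⟩)
  · rintro (rfl | ⟨n, hn, rfl⟩ | ⟨n, hn, rfl⟩)
    · exact ⟨none, rfl⟩
    · obtain ⟨k, rfl⟩ := Nat.exists_eq_add_of_le' hn
      exact ⟨some (.negSucc k), congrArg cls (normalForm_zero_negSucc k).symm⟩
    · obtain ⟨k, rfl⟩ := Nat.exists_eq_add_of_le' hn
      exact ⟨some k, congrArg cls (normalForm_zero_natCast k).symm⟩

end DQ

end OneGenerator

/-- The free digroup on the one-element set {x}: every element is the class of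
exactly one element of Ω_e ∪ Ω_x ∪ Ω_{x⁻¹}; the group part J is
{[ex^n]₁ : n ≥ 0} ∪ {[x^{−m}]₁ : m ≥ 1}; the halo E is
{[e]₁} ∪ {[x^{−n}x^n]_{n+1} : n ≥ 1} ∪ {[x^n x^{−n}]_n : n ≥ 1}. -/
theorem one_generator_free_digroup :
    (∀ c : DQ Unit, ∃! a : FD (Letter Unit), a ∈ OmE1 ∪ OmX1 ∪ OmI1 ∧ cls a = c) ∧
    ({b : DQ Unit | ∃ a : DQ Unit, DQ.vd a b = unitE Unit ∧ DQ.dv b a = unitE Unit} =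
      {c : DQ Unit |
        (∃ n : ℕ, c = cls ⟨[], Letter.e, List.replicate n (Letter.pos ())⟩) ∨
        (∃ m : ℕ, 1 ≤ m ∧
          c = cls ⟨[], Letter.neg (), List.replicate (m - 1) (Letter.neg ())⟩)}) ∧
    ({h : DQ Unit | ∀ a : DQ Unit, DQ.vd h a = a ∧ DQ.dv a h = a} =
      {c : DQ Unit | c = unitE Unit ∨
        (∃ n : ℕ, 1 ≤ n ∧ c = cls ⟨List.replicate n (Letter.neg ()), Letter.pos (),
          List.replicate (n - 1) (Letter.pos ())⟩) ∨
        (∃ n : ℕ, 1 ≤ n ∧ c = cls ⟨List.replicate (n - 1) (Letter.pos ()), Letter.pos (),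
          List.replicate n (Letter.neg ())⟩)}) := by
  refine ⟨DQ.existsUnique_normalForm, Set.ext fun c => ?_, Set.ext fun c => ?_⟩
  · exact DQ.mem_groupPart_iff_exists_normalForm.trans DQ.exists_eq_normalForm_none_iff
  · exact DQ.mem_halo_iff_exists_normalForm.trans DQ.exists_eq_normalForm_zero_iff
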